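/- arXiv:2312.15232 — 3 statements merged into one kernel-verified Lean document; each statement's English description precedes it below -/
import Mathlib

section
/- Let $G = \mathbb{R}^2 \setminus \{(x,0) : x \geq 0\}$ be the plane slit along the nonnegative real axis, and let $u(z) = \arg z$ denote the argument of $z$ chosen continuously with values in $(0, 2\pi)$ on $G$. Then $u$ satisfies the $(s, C)$-Harnack inequality in $G$ with $s = 1/2$ and $C = \frac{4+\pi}{4-\pi}$. -/
open Metric Set

/-- A continuous function `u : G → [0,∞)` on a plane domain `G ⊊ ℝ² ≅ ℂ` satisfies the
`(s, C)`-Harnack inequality in `G` if for every `x ∈ G` and every `r > 0` with `B(x,r) ⊆ G`,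
one has `u z₁ ≤ C * u z₂` for all `z₁, z₂` in the closed ball `B̄(x, s r)`. -/
def SatisfiesHarnack (u : ℂ → ℝ) (G : Set ℂ) (s C : ℝ) : Prop :=
  ∀ x ∈ G, ∀ r > (0 : ℝ), ball x r ⊆ G →
    ∀ z₁ ∈ closedBall x (s * r), ∀ z₂ ∈ closedBall x (s * r), u z₁ ≤ C * u z₂

/-- The argument of `z` chosen continuously with values in `(0, 2π)` on the plane slit along
the nonnegative real axis: it equals the principal argument when the latter is positive, and
the principal argument plus `2π` otherwise. -/
noncomputable def argSlit (z : ℂ) : ℝ :=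
  if 0 < Complex.arg z then Complex.arg z else Complex.arg z + 2 * Real.pi


lemma argSlit_polar (R φ : ℝ) (hR : 0 < R) (h0 : 0 < φ) (h1 : φ < 2 * Real.pi) :
    argSlit (R * Complex.exp (φ * Complex.I)) = φ := by
  unfold argSlit
  rw [Complex.arg_real_mul _ hR]
  by_cases h : φ ≤ Real.pi
  · have : Complex.arg (Complex.exp (φ * Complex.I)) = φ := by
      rw [Complex.exp_mul_I]
      exact Complex.arg_cos_add_sin_mul_I ⟨by linarith [Real.pi_pos], h⟩
    rw [this, if_pos h0]
  · have : Complex.arg (Complex.exp (φ * Complex.I)) = φ - 2 * Real.pi := by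
      have e : Complex.exp (φ * Complex.I)
          = Complex.exp (((φ - 2 * Real.pi : ℝ) : ℂ) * Complex.I) := by
        push_cast
        rw [sub_mul, Complex.exp_sub, Complex.exp_two_pi_mul_I, div_one]
      rw [e, Complex.exp_mul_I]
      exact Complex.arg_cos_add_sin_mul_I ⟨by linarith, by linarith [Real.pi_pos]⟩
    rw [this, if_neg (by linarith)]
    ring

lemma argSlit_exp (x : ℂ) :
    (‖x‖ : ℂ) * Complex.exp (argSlit x * Complex.I) = x := by
  have h := Complex.norm_mul_exp_arg_mul_I x
  unfold argSlit
  split_ifs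
  · exact h
  · push_cast
    rw [add_mul, Complex.exp_add, Complex.exp_two_pi_mul_I, mul_one]
    exact h

lemma argSlit_pos (x : ℂ) : 0 < argSlit x := by
  unfold argSlit
  split_ifs with h
  · exact h
  · linarith [Complex.neg_pi_lt_arg x, Real.pi_pos]

lemma argSlit_lt (x : ℂ) (hx : ¬(x.im = 0 ∧ 0 ≤ x.re)) : argSlit x < 2 * Real.pi := by
  unfold argSlit
  split_ifs with h
  · linarith [Complex.arg_le_pi x, Real.pi_pos]
  · have : Complex.arg x ≠ 0 := fun h' => hx (by
      rw [Complex.arg_eq_zero_iff] at h'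
      exact ⟨h'.2, h'.1⟩)
    have : Complex.arg x < 0 := lt_of_le_of_ne (not_lt.mp h) this
    linarith

lemma arg_near_one (w : ℂ) (t : ℝ) (ht : t < 1) (hw : ‖w - 1‖ ≤ t) :
    |w.arg| < Real.pi / 2 ∧ Real.sin |w.arg| ≤ t := by
  have hre : 0 < w.re := by
    have := Complex.abs_re_le_norm (w - 1)
    have h2 := (abs_le.mp this).1
    simp at h2
    linarith
  have hb : |w.arg| < Real.pi / 2 := Complex.abs_arg_lt_pi_div_two_iff.mpr (Or.inl hre)
  refine ⟨hb, ?_⟩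
  have hw0 : 0 < ‖w‖ := norm_pos_iff.mpr (by rintro rfl; simp at hre)
  have hs : |Real.sin w.arg| ≤ t := by
    rw [Complex.sin_arg, abs_div, abs_of_pos hw0, div_le_iff₀ hw0]
    have h1 : |((starRingEnd ℂ) w * (w - 1)).im| ≤ ‖(starRingEnd ℂ) w * (w - 1)‖ :=
      Complex.abs_im_le_norm _
    have h2 : ((starRingEnd ℂ) w * (w - 1)).im = w.im := by
      simp [Complex.mul_im]; ring
    rw [h2, norm_mul, Complex.norm_conj] at h1
    nlinarith
  rcases abs_cases w.arg with ⟨h, _⟩ | ⟨h, _⟩ <;> rw [h]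
  · exact (abs_le.mp hs).2
  · rw [Real.sin_neg]; linarith [(abs_le.mp hs).1]

lemma half_bound (b m t : ℝ) (hb0 : 0 ≤ b) (hb : b < Real.pi / 2) (hm : 0 < m)
    (hmp : m ≤ Real.pi) (hs : Real.sin b ≤ t) (ht : t ≤ 1 / 2)
    (ht2 : 0 < Real.cos m → t ≤ Real.sin m / 2) : b ≤ m / 2 := by
  have hpi := Real.pi_pos
  by_contra hc
  push Not at hc
  by_cases h : m < Real.pi / 2
  · have h1 : Real.sin (m / 2) < Real.sin b :=
      Real.sin_lt_sin_of_lt_of_le_pi_div_two (by linarith) hb.le hc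
    have h2 := ht2 (Real.cos_pos_of_mem_Ioo ⟨by linarith, h⟩)
    have h3 : Real.sin m = 2 * Real.sin (m / 2) * Real.cos (m / 2) := by
      rw [← Real.sin_two_mul]; congr 1; ring
    have h4 := Real.cos_le_one (m / 2)
    have h5 : 0 < Real.sin (m / 2) := Real.sin_pos_of_pos_of_lt_pi (by linarith) (by linarith)
    nlinarith
  · have h1 : Real.sin (Real.pi / 6) < Real.sin b :=
      Real.sin_lt_sin_of_lt_of_le_pi_div_two (by linarith) hb.le (by linarith)
    rw [Real.sin_pi_div_six] at h1
    linarith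

lemma argSlit_near (x : ℂ) (hx : ¬(x.im = 0 ∧ 0 ≤ x.re)) (r : ℝ)
    (hball : ball x r ⊆ {z : ℂ | ¬(z.im = 0 ∧ 0 ≤ z.re)}) (z : ℂ)
    (hz : z ∈ closedBall x (1 / 2 * r)) : |argSlit z - argSlit x| ≤ argSlit x / 2 := by
  have hpi := Real.pi_pos
  have h0 := argSlit_pos x
  have h1 := argSlit_lt x hx
  have he := argSlit_exp x
  set θ := argSlit x with hθ
  have hx0 : x ≠ 0 := by rintro rfl; simp at hx
  have hn : 0 < ‖x‖ := norm_pos_iff.mpr hx0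
  have hr1 : r ≤ ‖x‖ := by
    by_contra hc
    push Not at hc
    have : (0 : ℂ) ∈ ball x r := by simpa [dist_eq_norm] using hc
    exact hball this (by simp)
  have hxre : x.re = ‖x‖ * Real.cos θ := by
    conv_lhs => rw [← he]
    rw [Complex.re_ofReal_mul, Complex.exp_ofReal_mul_I_re]
  have hxim : x.im = ‖x‖ * Real.sin θ := by
    conv_lhs => rw [← he]
    rw [Complex.im_ofReal_mul, Complex.exp_ofReal_mul_I_im]
  have hr2 : 0 < x.re → r ≤ |x.im| := by
    intro hre
    by_contra hc
    push Not at hc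
    have : (x.re : ℂ) ∈ ball x r := by
      rw [mem_ball, dist_comm, dist_eq_norm]
      have : x - (x.re : ℂ) = (x.im : ℂ) * Complex.I := by
        apply Complex.ext <;> simp
      rw [this]
      simpa using hc
    exact hball this (by simpa using hre.le)
  rw [mem_closedBall, dist_eq_norm] at hz
  have hw : ‖z / x - 1‖ ≤ r / (2 * ‖x‖) := by
    rw [div_sub_one hx0, norm_div, div_le_div_iff₀ hn (by positivity)]
    nlinarith
  have ht : r / (2 * ‖x‖) ≤ 1 / 2 := by
    rw [div_le_div_iff₀ (by positivity) (by norm_num)]; linarith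
  obtain ⟨hb, hs⟩ := arg_near_one (z / x) _ (by linarith) hw
  have key : |(z / x).arg| ≤ min θ (2 * Real.pi - θ) / 2 := by
    apply half_bound _ _ _ (abs_nonneg _) hb (lt_min h0 (by linarith)) _ hs ht
    · intro hc
      have hcos : Real.cos (min θ (2 * Real.pi - θ)) = Real.cos θ := by
        rcases min_choice θ (2 * Real.pi - θ) with h | h <;> rw [h]
        rw [Real.cos_two_pi_sub]
      have hsin : |Real.sin θ| = Real.sin (min θ (2 * Real.pi - θ)) := by
        rcases le_total θ Real.pi with h | h
        · rw [min_eq_left (by linarith), abs_of_nonneg (Real.sin_nonneg_of_nonneg_of_le_pi h0.le h)]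
        · rw [min_eq_right (by linarith)]
          have : 0 ≤ Real.sin (2 * Real.pi - θ) :=
            Real.sin_nonneg_of_nonneg_of_le_pi (by linarith) (by linarith)
          rw [Real.sin_two_pi_sub] at this ⊢
          rw [abs_of_nonpos (by linarith)]
      rw [← hsin]
      have := hr2 (by rw [hxre, ← hcos]; positivity)
      rw [hxim, abs_mul, abs_of_pos hn] at this
      rw [div_le_div_iff₀ (by positivity) (by norm_num)]
      linarith
    · rcases le_total θ Real.pi with h | h
      · exact (min_le_left _ _).trans h
      · exact (min_le_right _ _).trans (by linarith)
  have k1 := min_le_left θ (2 * Real.pi - θ)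
  have k2 := min_le_right θ (2 * Real.pi - θ)
  have k3 := abs_le.mp key
  have hz0 : z / x ≠ 0 := by
    intro h
    rw [h] at hw
    norm_num at hw ht
    linarith
  have hzz : z = ((‖x‖ * ‖z / x‖ : ℝ) : ℂ) *
      Complex.exp (((θ + (z / x).arg : ℝ) : ℂ) * Complex.I) := by
    have e := Complex.norm_mul_exp_arg_mul_I (z / x)
    calc z = x * (z / x) := by field_simp
      _ = (‖x‖ * Complex.exp (θ * Complex.I)) *
          (‖z / x‖ * Complex.exp ((z / x).arg * Complex.I)) := by rw [he, e]
      _ = _ := by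
        rw [Complex.ofReal_add, add_mul, Complex.exp_add, Complex.ofReal_mul]; ring
  have hfin : argSlit z = θ + (z / x).arg := by
    conv_lhs => rw [hzz]
    exact argSlit_polar _ _ (mul_pos hn (norm_pos_iff.mpr hz0)) (by linarith [k3.1])
      (by linarith [k3.2])
  rw [hfin, add_sub_cancel_left]
  linarith

/-- On the slit plane `G = ℝ² ∖ {(x,0) : x ≥ 0}`, the function `u(z) = arg z` (with values
in `(0, 2π)`) satisfies the `(s, C)`-Harnack inequality with `s = 1/2` and
`C = (4+π)/(4-π)`. -/
theorem stmt_1 :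
    SatisfiesHarnack argSlit {z : ℂ | ¬(z.im = 0 ∧ 0 ≤ z.re)} (1 / 2)
      ((4 + Real.pi) / (4 - Real.pi)) := by
  intro x hx r hr hball z₁ h₁ z₂ h₂
  have a := abs_le.mp (argSlit_near x hx r hball z₁ h₁)
  have b := abs_le.mp (argSlit_near x hx r hball z₂ h₂)
  have p := argSlit_pos z₂
  have hC : 3 ≤ (4 + Real.pi) / (4 - Real.pi) := by
    rw [le_div_iff₀ (by linarith [Real.pi_lt_four])]
    linarith [Real.pi_gt_three]
  nlinarith [a.2, b.1]
end

section
/- Let $R > 0$, $M > 0$, $a \in \mathbb{C}$, and let $u$ be a complex-valued harmonic function on the disk $B^2(a,R) = \{w \in \mathbb{C} : |w-a| < R\}$ with $|u(w)| \leq M$ for all $w \in B^2(a,R)$. Then for every $z \in \mathbb{C}$ with $0 < |z| < R$, $\left| u(a+z) - \frac{R^2 - |z|^2}{R^2 + |z|^2}\, u(a) \right| \leq \frac{2M}{\pi} \arctan\left( \frac{2R|z|}{R^2 - |z|^2} \right)$. -/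
open Metric Set

/-- A complex-valued function `u` is harmonic on `G ⊆ ℂ ≅ ℝ²` if it is twice continuously
differentiable (as a function of two real variables) and satisfies the Laplace equation
`∂²u/∂x² + ∂²u/∂y² = 0` on `G`. -/
def IsHarmonicOn (u : ℂ → ℂ) (G : Set ℂ) : Prop :=
  ContDiffOn ℝ 2 u G ∧ ∀ z ∈ G,
    iteratedFDeriv ℝ 2 u z ![1, 1] + iteratedFDeriv ℝ 2 u z ![Complex.I, Complex.I] = 0

open InnerProductSpace in
lemma aux_harm (u : ℂ → ℂ) (a : ℂ) (R : ℝ) (hu : IsHarmonicOn u (ball a R)) :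
    HarmonicOnNhd u (ball a R) := by
  intro x hx
  have hn : ball a R ∈ nhds x := isOpen_ball.mem_nhds hx
  refine ⟨hu.1.contDiffAt hn, ?_⟩
  rw [laplacian_eq_iteratedFDeriv_complexPlane]
  filter_upwards [hn] with y hy
  exact hu.2 y hy

lemma aux_den (r s t : ℝ) (hs : 0 < s) (hsr : s < r) :
    0 < r ^ 2 + s ^ 2 - 2 * r * s * Real.sin t := by
  have h1 := Real.sin_le_one t
  have : 0 < (r - s) ^ 2 := by have : 0 < r - s := by linarith
                               positivity
  have : 0 < r * s := mul_pos (hs.trans hsr) hs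
  nlinarith

lemma aux_deriv (r s t : ℝ) (hs : 0 < s) (hsr : s < r) :
    HasDerivAt (fun t => (1 - (r ^ 2 - s ^ 2) / (r ^ 2 + s ^ 2)) * t
      + 2 * Real.arctan (-(s * Real.cos t) / (r - s * Real.sin t)))
      ((r ^ 2 - s ^ 2) / (r ^ 2 + s ^ 2 - 2 * r * s * Real.sin t)
        - (r ^ 2 - s ^ 2) / (r ^ 2 + s ^ 2)) t := by
  have h1 := Real.sin_le_one t
  have hd : 0 < r - s * Real.sin t := by nlinarith
  have hD := aux_den r s t hs hsr
  have hc := ((((Real.hasDerivAt_cos t).const_mul s).neg).div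
    (((Real.hasDerivAt_sin t).const_mul s).const_sub r) hd.ne').arctan
  have := ((hasDerivAt_id t).const_mul (1 - (r ^ 2 - s ^ 2) / (r ^ 2 + s ^ 2))).add
    (hc.const_mul 2)
  refine this.congr_deriv ?_
  have hsc := Real.sin_sq_add_cos_sq t
  have hr : 0 < r := hs.trans hsr
  have hrs : 0 < r ^ 2 + s ^ 2 := by positivity
  have e : 1 + ((-(s * Real.cos t)) / (r - s * Real.sin t)) ^ 2
      = (r ^ 2 + s ^ 2 - 2 * r * s * Real.sin t) / (r - s * Real.sin t) ^ 2 := by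
    field_simp
    linear_combination s ^ 2 * hsc
  simp only [Pi.neg_apply, Pi.div_apply]
  rw [e]
  have hN : -(s * -Real.sin t) * (r - s * Real.sin t) - -(s * Real.cos t) * -(s * Real.cos t)
      = r * s * Real.sin t - s ^ 2 := by
    linear_combination (-s ^ 2) * hsc
  rw [hN]
  have h5 : 1 / ((r ^ 2 + s ^ 2 - 2 * r * s * Real.sin t) / (r - s * Real.sin t) ^ 2) *
      ((r * s * Real.sin t - s ^ 2) / (r - s * Real.sin t) ^ 2)
      = (r * s * Real.sin t - s ^ 2) / (r ^ 2 + s ^ 2 - 2 * r * s * Real.sin t) := by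
    generalize r ^ 2 + s ^ 2 - 2 * r * s * Real.sin t = D at hD
    field_simp
  rw [h5]
  have h6 : (r ^ 2 - s ^ 2) / (r ^ 2 + s ^ 2 - 2 * r * s * Real.sin t)
      = 1 + 2 * ((r * s * Real.sin t - s ^ 2) / (r ^ 2 + s ^ 2 - 2 * r * s * Real.sin t)) := by
    rw [div_eq_iff hD.ne', add_mul, mul_assoc 2 (_ / _), div_mul_cancel₀ _ hD.ne']
    ring
  rw [h6]
  ring

lemma aux_int (r s M : ℝ) (hs : 0 < s) (hsr : s < r) (g : ℝ → ℝ) (hg : Continuous g)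
    (hb : ∀ t, |g t| ≤ M) :
    ∫ t in (0 : ℝ)..2 * Real.pi, ((r ^ 2 - s ^ 2) / (r ^ 2 + s ^ 2 - 2 * r * s * Real.sin t)
        - (r ^ 2 - s ^ 2) / (r ^ 2 + s ^ 2)) * g t
      ≤ 4 * M * Real.arctan (2 * r * s / (r ^ 2 - s ^ 2)) := by
  have hr : 0 < r := hs.trans hsr
  have hrs : 0 < r ^ 2 + s ^ 2 := by positivity
  have hrs' : 0 < r ^ 2 - s ^ 2 := by nlinarith
  have hpi := Real.pi_pos
  set f : ℝ → ℝ := fun t => (r ^ 2 - s ^ 2) / (r ^ 2 + s ^ 2 - 2 * r * s * Real.sin t)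
        - (r ^ 2 - s ^ 2) / (r ^ 2 + s ^ 2) with hf
  have hfc : Continuous f := by
    apply Continuous.sub _ continuous_const
    apply Continuous.div continuous_const (by fun_prop)
    intro t; exact (aux_den r s t hs hsr).ne'
  have hfi : ∀ x y, IntervalIntegrable f MeasureTheory.volume x y :=
    fun x y => hfc.intervalIntegrable x y
  have hfgi : ∀ x y, IntervalIntegrable (fun t => f t * g t) MeasureTheory.volume x y :=
    fun x y => (hfc.mul hg).intervalIntegrable x y
  have hftc := fun x y => intervalIntegral.integral_eq_sub_of_hasDerivAt
    (fun t _ => aux_deriv r s t hs hsr) (hfi x y)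
  have hM : ∀ t, g t ≤ M ∧ -M ≤ g t := fun t => ⟨(abs_le.1 (hb t)).2, (abs_le.1 (hb t)).1⟩
  have hat : Real.arctan (2 * r * s / (r ^ 2 - s ^ 2)) = 2 * Real.arctan (s / r) := by
    rw [Real.two_mul_arctan]
    · congr 1; field_simp
    · have : 0 < s / r := by positivity
      linarith
    · rwa [div_lt_one hr]
  have A : ∫ t in (0 : ℝ)..Real.pi, f t * g t ≤ ∫ t in (0 : ℝ)..Real.pi, f t * M := by
    apply intervalIntegral.integral_mono_on hpi.le (hfgi _ _) ((hfi _ _).mul_const M)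
    intro t ht
    apply mul_le_mul_of_nonneg_left (hM t).1
    have h0 := Real.sin_nonneg_of_mem_Icc ht
    rw [hf]; simp only [sub_nonneg]
    apply div_le_div_of_nonneg_left hrs'.le (aux_den r s t hs hsr)
    have : 0 ≤ 2 * r * s * Real.sin t := by positivity
    linarith
  have B : ∫ t in Real.pi..2 * Real.pi, f t * g t ≤ ∫ t in Real.pi..2 * Real.pi, f t * (-M) := by
    apply intervalIntegral.integral_mono_on (by linarith) (hfgi _ _) ((hfi _ _).mul_const _)
    intro t ht
    apply mul_le_mul_of_nonpos_left (hM t).2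
    have h0 : 0 ≤ Real.sin (t - Real.pi) :=
      Real.sin_nonneg_of_mem_Icc ⟨by linarith [ht.1], by linarith [ht.2]⟩
    rw [Real.sin_sub_pi] at h0
    rw [hf]; simp only [sub_nonpos]
    apply div_le_div_of_nonneg_left hrs'.le hrs
    have : 0 ≤ 2 * r * s * (-Real.sin t) := by positivity
    linarith
  rw [← intervalIntegral.integral_add_adjacent_intervals (hfgi 0 Real.pi) (hfgi Real.pi _)]
  rw [intervalIntegral.integral_mul_const, hftc] at A B
  simp only [Real.cos_pi, Real.sin_pi, Real.cos_zero, Real.sin_zero, Real.cos_two_pi,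
    Real.sin_two_pi, mul_zero, sub_zero, mul_one, mul_neg, neg_neg, neg_div, Real.arctan_neg]
    at A B
  rw [hat]
  linarith

open InnerProductSpace in
lemma aux_real (r M : ℝ) (a z : ℂ) (v : ℂ → ℝ) (hv : HarmonicOnNhd v (closedBall a r))
    (hb : ∀ w ∈ closedBall a r, |v w| ≤ M) (hz0 : 0 < ‖z‖) (hzr : ‖z‖ < r) :
    v (a + z) - (r ^ 2 - ‖z‖ ^ 2) / (r ^ 2 + ‖z‖ ^ 2) * v a ≤
      2 * M / Real.pi * Real.arctan (2 * r * ‖z‖ / (r ^ 2 - ‖z‖ ^ 2)) := by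
  have hr : 0 < r := hz0.trans hzr
  have h1 := hv.circleAverage_poissonKernel_smul (w := a + z) (by simpa using hzr)
  have h2 : Real.circleAverage v a r = v a :=
    InnerProductSpace.HarmonicOnNhd.circleAverage_eq (by rwa [abs_of_pos hr])
  rw [Real.circleAverage_eq_integral_add (z.arg - Real.pi / 2)] at h1 h2
  set η := z.arg - Real.pi / 2 with hη
  have hmem : ∀ t, circleMap a r t ∈ closedBall a r := fun t => circleMap_mem_closedBall a hr.le t
  set g : ℝ → ℝ := fun t => v (circleMap a r (t + η)) with hg
  have hgc : Continuous g :=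
    hv.continuousOn.comp_continuous (by fun_prop) (fun t => hmem _)
  have hP : ∀ t, (poissonKernel a (a + z) • v) (circleMap a r (t + η))
      = (r ^ 2 - ‖z‖ ^ 2) / (r ^ 2 + ‖z‖ ^ 2 - 2 * r * ‖z‖ * Real.sin t) * g t := by
    intro t
    simp only [Pi.smul_apply', smul_eq_mul, poissonKernel_def, hg]
    congr 2
    · have hn := Complex.norm_exp_ofReal_mul_I (t + η)
      push_cast at hn
      simp [circleMap, abs_of_pos hr, hn]
    · rw [← Complex.normSq_eq_norm_sq, Complex.normSq_apply]
      have e1 : (circleMap a r (t + η) - a - (a + z - a)).re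
          = r * Real.cos (t + η) - ‖z‖ * Real.cos z.arg := by
        rw [Complex.norm_mul_cos_arg]
        simp [circleMap, Complex.exp_re]
      have e2 : (circleMap a r (t + η) - a - (a + z - a)).im
          = r * Real.sin (t + η) - ‖z‖ * Real.sin z.arg := by
        rw [Complex.norm_mul_sin_arg]
        simp [circleMap, Complex.exp_im]
      have e3 : Real.sin t = Real.cos (t + η - z.arg) := by
        rw [hη, show t + (z.arg - Real.pi / 2) - z.arg = t - Real.pi / 2 by ring,
          Real.cos_sub_pi_div_two]
      rw [e1, e2, e3, Real.cos_sub]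
      linear_combination r ^ 2 * Real.sin_sq_add_cos_sq (t + η)
        + ‖z‖ ^ 2 * Real.sin_sq_add_cos_sq z.arg
  simp only [hP, smul_eq_mul] at h1 h2
  have h3 := aux_int r ‖z‖ M hz0 hzr g hgc (fun t => hb _ (hmem _))
  have hKc : Continuous fun t : ℝ =>
      (r ^ 2 - ‖z‖ ^ 2) / (r ^ 2 + ‖z‖ ^ 2 - 2 * r * ‖z‖ * Real.sin t) := by
    apply Continuous.div continuous_const (by fun_prop)
    intro t; exact (aux_den r ‖z‖ t hz0 hzr).ne'
  simp only [sub_mul] at h3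
  have i1 : IntervalIntegrable (fun t : ℝ =>
      (r ^ 2 - ‖z‖ ^ 2) / (r ^ 2 + ‖z‖ ^ 2 - 2 * r * ‖z‖ * Real.sin t) * g t)
      MeasureTheory.volume 0 (2 * Real.pi) := (hKc.mul hgc).intervalIntegrable _ _
  have i2 : IntervalIntegrable (fun t : ℝ => (r ^ 2 - ‖z‖ ^ 2) / (r ^ 2 + ‖z‖ ^ 2) * g t)
      MeasureTheory.volume 0 (2 * Real.pi) := (continuous_const.mul hgc).intervalIntegrable _ _
  rw [intervalIntegral.integral_sub i1 i2, intervalIntegral.integral_const_mul] at h3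
  rw [← h1, ← h2]
  have hpi := Real.pi_pos
  have h4 := mul_le_mul_of_nonneg_left h3 (inv_pos.2 (mul_pos two_pos hpi)).le
  refine le_trans (le_of_eq ?_) (h4.trans (le_of_eq ?_))
  · ring
  · field_simp; ring

/-- Harmonic Schwarz lemma: if `u` is a complex-valued harmonic function on the disk
`B(a,R)` with `|u| ≤ M`, then for `0 < |z| < R`,
`|u(a+z) - ((R²-|z|²)/(R²+|z|²)) u(a)| ≤ (2M/π) arctan(2R|z|/(R²-|z|²))`. -/
theorem stmt_8 (R M : ℝ) (hR : 0 < R) (hM : 0 < M) (a : ℂ) (u : ℂ → ℂ)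
    (hu : IsHarmonicOn u (ball a R)) (hbd : ∀ w ∈ ball a R, ‖u w‖ ≤ M)
    (z : ℂ) (hz0 : 0 < ‖z‖) (hzR : ‖z‖ < R) :
    ‖u (a + z) - (((R ^ 2 - ‖z‖ ^ 2) / (R ^ 2 + ‖z‖ ^ 2) : ℝ) : ℂ) * u a‖ ≤
      2 * M / Real.pi * Real.arctan (2 * R * ‖z‖ / (R ^ 2 - ‖z‖ ^ 2)) := by
  have hh := aux_harm u a R hu
  set k : ℝ := (R ^ 2 - ‖z‖ ^ 2) / (R ^ 2 + ‖z‖ ^ 2) with hk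
  set W : ℂ := u (a + z) - (k : ℂ) * u a with hW
  obtain ⟨c, hc, hcW⟩ : ∃ c : ℂ, ‖c‖ = 1 ∧ c * W = ‖W‖ := by
    refine ⟨Complex.exp (-(W.arg * Complex.I)), ?_, ?_⟩
    · have := Complex.norm_exp_ofReal_mul_I (-W.arg)
      simpa using this
    · conv_lhs => rw [← Complex.norm_mul_exp_arg_mul_I W]
      rw [mul_left_comm, ← Complex.exp_add]
      simp
  let L : ℂ →L[ℝ] ℝ := Complex.reCLM.comp (ContinuousLinearMap.mul ℝ ℂ c)
  have hL : ∀ w, L w = (c * w).re := fun w => rfl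
  have hv := hh.comp_CLM L
  have hvb : ∀ w ∈ ball a R, |(L ∘ u) w| ≤ M := by
    intro w hw
    rw [Function.comp_apply, hL]
    refine (Complex.abs_re_le_norm _).trans ?_
    rw [norm_mul, hc, one_mul]
    exact hbd w hw
  have hgoal : ‖W‖ = (L ∘ u) (a + z) - k * (L ∘ u) a := by
    have : L W = ‖W‖ := by rw [hL, hcW, Complex.ofReal_re]
    rw [← this, hW, map_sub, ← Complex.real_smul, map_smul]
    rfl
  rw [hgoal, hk]
  have hR' : 0 < R ^ 2 - ‖z‖ ^ 2 := by nlinarith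
  have hR2 : 0 < R ^ 2 + ‖z‖ ^ 2 := by positivity
  have c1 : ContinuousAt (fun r : ℝ => (L ∘ u) (a + z)
      - (r ^ 2 - ‖z‖ ^ 2) / (r ^ 2 + ‖z‖ ^ 2) * (L ∘ u) a) R := by
    refine continuousAt_const.sub (ContinuousAt.mul (ContinuousAt.div ?_ ?_ hR2.ne')
      continuousAt_const) <;> fun_prop
  have c2 : ContinuousAt (fun r : ℝ =>
      2 * M / Real.pi * Real.arctan (2 * r * ‖z‖ / (r ^ 2 - ‖z‖ ^ 2))) R := by
    refine continuousAt_const.mul (Real.continuous_arctan.continuousAt.comp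
      (ContinuousAt.div ?_ ?_ hR'.ne')) <;> fun_prop
  refine le_of_tendsto_of_tendsto (b := nhdsWithin R (Iio R))
    (c1.tendsto.mono_left nhdsWithin_le_nhds) (c2.tendsto.mono_left nhdsWithin_le_nhds) ?_
  filter_upwards [Ioo_mem_nhdsLT hzR] with r hr
  have hsub : closedBall a r ⊆ ball a R := closedBall_subset_ball hr.2
  exact aux_real r M a z (L ∘ u) (hv.mono hsub) (fun w hw => hvb w (hsub hw)) hz0 hr.1
end

section
/- Let $R > 0$, $a \in \mathbb{C}$, and let $u$ be a complex-valued function continuous on the closed disk $\overline{B}^2(a,R)$ and harmonic on the open disk $B^2(a,R)$. Then for every $r$ with $0 < r < R$, $u(a+r) - \frac{R^2-r^2}{R^2+r^2}\, u(a) = \frac{rR(R^2-r^2)}{\pi(R^2+r^2)} \int_{-\pi}^{\pi} \frac{\cos\theta}{R^2 + r^2 - 2rR\cos\theta}\, u\left(a + R e^{i\theta}\right) \mathrm{d}\theta$. -/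
open Metric Set

lemma poisson_real (R : ℝ) (hR : 0 < R) (a : ℂ) (f : ℂ → ℝ)
    (hf : InnerProductSpace.HarmonicContOnCl f (ball a R)) (s : ℝ) (hs : 0 ≤ s) (hsR : s < R) :
    f (a + s) = (2 * Real.pi)⁻¹ * ∫ θ in (-Real.pi)..Real.pi,
      ((R ^ 2 - s ^ 2) / (R ^ 2 + s ^ 2 - 2 * s * R * Real.cos θ)) *
        f (a + R * Complex.exp (θ * Complex.I)) := by
  have hw : (a + s : ℂ) ∈ ball a R := by
    simp [mem_ball, dist_eq_norm, abs_of_nonneg hs, hsR]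
  rw [← hf.circleAverage_poissonKernel_smul hw, Real.circleAverage_eq_integral_add (-Real.pi),
    intervalIntegral.integral_comp_add_right
      (fun θ ↦ (poissonKernel a (a + s) • f) (circleMap a R θ)), smul_eq_mul]
  have h1 : 0 + -Real.pi = -Real.pi := by ring
  have h2 : 2 * Real.pi + -Real.pi = Real.pi := by ring
  rw [h1, h2]
  congr 1
  apply intervalIntegral.integral_congr
  intro θ _
  simp only [Pi.smul_apply', smul_eq_mul, circleMap, poissonKernel_def, add_sub_cancel_left]
  congr 2
  · simp [Complex.norm_exp_ofReal_mul_I]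
  · rw [← Complex.normSq_eq_norm_sq, Complex.normSq_apply]
    simp [Complex.exp_ofReal_mul_I_re, Complex.exp_ofReal_mul_I_im]
    nlinarith [Real.sin_sq_add_cos_sq θ]

lemma denom_pos (R s t : ℝ) (hs : 0 ≤ s) (hsR : s < R) :
    0 < R ^ 2 + s ^ 2 - 2 * s * R * Real.cos t := by
  have h := Real.cos_le_one t
  have h1 : 0 < (R - s) ^ 2 := by
    have : 0 < R - s := by linarith
    positivity
  have h2 : 0 ≤ s * R * (1 - Real.cos t) := by
    have : 0 ≤ 1 - Real.cos t := by linarith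
    have : 0 < R := by linarith
    positivity
  nlinarith

lemma cont_circ (R : ℝ) (hR : 0 < R) (a : ℂ) (u : ℂ → ℂ)
    (hcont : ContinuousOn u (closedBall a R)) :
    Continuous (fun θ : ℝ ↦ u (a + R * Complex.exp (θ * Complex.I))) := by
  apply hcont.comp_continuous (by fun_prop)
  intro θ
  simp [mem_closedBall, dist_eq_norm, Complex.norm_exp_ofReal_mul_I, abs_of_pos hR]

lemma poisson_complex (R : ℝ) (hR : 0 < R) (a : ℂ) (u : ℂ → ℂ)
    (hcont : ContinuousOn u (closedBall a R)) (hu : IsHarmonicOn u (ball a R))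
    (s : ℝ) (hs : 0 ≤ s) (hsR : s < R) :
    u (a + s) = (2 * Real.pi)⁻¹ * ∫ θ in (-Real.pi)..Real.pi,
      (((R ^ 2 - s ^ 2) / (R ^ 2 + s ^ 2 - 2 * s * R * Real.cos θ) : ℝ) : ℂ) *
        u (a + R * Complex.exp (θ * Complex.I)) := by
  have hh : InnerProductSpace.HarmonicContOnCl u (ball a R) := by
    refine .mk_ball (fun x hx ↦ ⟨hu.1.contDiffAt (isOpen_ball.mem_nhds hx), ?_⟩) hcont
    filter_upwards [isOpen_ball.mem_nhds hx] with y hy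
    rw [InnerProductSpace.laplacian_eq_iteratedFDeriv_complexPlane]
    exact hu.2 y hy
  have hc := cont_circ R hR a u hcont
  have hk : Continuous (fun θ : ℝ ↦
      (R ^ 2 - s ^ 2) / (R ^ 2 + s ^ 2 - 2 * s * R * Real.cos θ)) :=
    continuous_const.div (by fun_prop) (fun t ↦ (denom_pos R s t hs hsR).ne')
  have key : ∀ l : ℂ →L[ℝ] ℝ, l (u (a + s)) = l ((2 * Real.pi)⁻¹ * ∫ θ in (-Real.pi)..Real.pi,
      (((R ^ 2 - s ^ 2) / (R ^ 2 + s ^ 2 - 2 * s * R * Real.cos θ) : ℝ) : ℂ) *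
        u (a + R * Complex.exp (θ * Complex.I))) := by
    intro l
    have h := poisson_real R hR a _ (hh.comp_CLM l) s hs hsR
    rw [← Complex.real_smul, map_smul, ← l.intervalIntegral_comp_comm]
    · simp only [← Complex.real_smul, map_smul]
      exact h
    · exact ((Complex.continuous_ofReal.comp hk).mul hc).intervalIntegrable _ _
  exact Complex.ext (key Complex.reCLM) (key Complex.imCLM)

/-- If `u` is continuous on the closed disk `B̄(a,R)` and harmonic on `B(a,R)`, then for
`0 < r < R`,
`u(a+r) - ((R²-r²)/(R²+r²)) u(a)
  = (rR(R²-r²))/(π(R²+r²)) ∫_{-π}^{π} cos θ/(R²+r²-2rR cos θ) · u(a+Re^{iθ}) dθ`. -/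
theorem stmt_10 (R : ℝ) (hR : 0 < R) (a : ℂ) (u : ℂ → ℂ)
    (hcont : ContinuousOn u (closedBall a R)) (hu : IsHarmonicOn u (ball a R))
    (r : ℝ) (hr : 0 < r) (hrR : r < R) :
    u (a + r) - (((R ^ 2 - r ^ 2) / (R ^ 2 + r ^ 2) : ℝ) : ℂ) * u a =
      ((r * R * (R ^ 2 - r ^ 2) / (Real.pi * (R ^ 2 + r ^ 2)) : ℝ) : ℂ) *
        ∫ θ in (-Real.pi)..Real.pi,
          ((Real.cos θ / (R ^ 2 + r ^ 2 - 2 * r * R * Real.cos θ) : ℝ) : ℂ) *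
            u (a + R * Complex.exp (θ * Complex.I)) := by
  have h1 := poisson_complex R hR a u hcont hu r hr.le hrR
  have h0 := poisson_complex R hR a u hcont hu 0 le_rfl hR
  have hc := cont_circ R hR a u hcont
  have hk : Continuous (fun θ : ℝ ↦
      (R ^ 2 - r ^ 2) / (R ^ 2 + r ^ 2 - 2 * r * R * Real.cos θ)) :=
    continuous_const.div (by fun_prop) (fun t ↦ (denom_pos R r t hr.le hrR).ne')
  have e0 : ∀ θ : ℝ, (R ^ 2 - 0 ^ 2) / (R ^ 2 + 0 ^ 2 - 2 * 0 * R * Real.cos θ) = 1 := by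
    intro θ
    have := hR.ne'
    simp [this]
  simp only [e0, Complex.ofReal_zero, add_zero, Complex.ofReal_one, one_mul] at h0
  rw [h1, h0, mul_left_comm, ← mul_sub, ← intervalIntegral.integral_const_mul,
    ← intervalIntegral.integral_sub, ← intervalIntegral.integral_const_mul,
    ← intervalIntegral.integral_const_mul]
  · apply intervalIntegral.integral_congr
    intro θ _
    simp only
    rw [← sub_mul, ← mul_assoc, ← mul_assoc]
    congr 1
    have hd := (denom_pos R r θ hr.le hrR).ne'
    have hp : R ^ 2 + r ^ 2 ≠ 0 := by positivity
    have hpi := Real.pi_ne_zero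
    norm_cast
    generalize Real.cos θ = c at *
    obtain ⟨D, hD⟩ : ∃ D, R ^ 2 + r ^ 2 - 2 * r * R * c = D := ⟨_, rfl⟩
    rw [hD] at hd ⊢
    field_simp
    linear_combination (R ^ 2 - r ^ 2) * hD
  · exact ((Complex.continuous_ofReal.comp hk).mul hc).intervalIntegrable _ _
  · exact (continuous_const.mul hc).intervalIntegrable _ _
end
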